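/- Let d be a graph metric with vertex set V and edge set E such that the metric space ([V]², d̈) contains a separable uncountable subspace S ⊆ [V]² \ E (i.e., S is uncountable and there is a countable A ⊆ S such that for every s ∈ S and ε > 0 there exists a ∈ A with d̈(a,s) < ε). Then for every ordinal λ and every family 𝔉 of subsets of ℝ each containing at least two elements, player II has a winning strategy in the metric-extending game Game_d(λ,𝔉). -/

import Mathlib

open scoped Classical

universe u

namespace GraphMetricPaper

variable {X : Type u}

/-- The vertex set `V = ⋃ E` of a graph given by an adjacency relation `E`. -/
def Vtx (E : X → X → Prop) : Set X := {x | ∃ y, E x y}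

/-- Two points are joined by a walk in the graph `E`. -/
def Joined (E : X → X → Prop) (x y : X) : Prop :=
  ∃ (n : ℕ) (c : ℕ → X), c 0 = x ∧ c n = y ∧ ∀ i, i < n → E (c i) (c (i + 1))

/-- The set of weights of walks from `x` to `y`. -/
def walkSums (E : X → X → Prop) (d : X → X → ℝ) (x y : X) : Set ℝ :=
  {s | ∃ (n : ℕ) (c : ℕ → X), c 0 = x ∧ c n = y ∧ (∀ i, i < n → E (c i) (c (i + 1))) ∧
    s = ∑ i ∈ Finset.range n, d (c i) (c (i + 1))}

/-- The shortest-path pseudometric `d̂` determined by a weight function `d` on a graph `E`. -/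
noncomputable def hatd (E : X → X → Prop) (d : X → X → ℝ) (x y : X) : ℝ :=
  sInf (walkSums E d x y)

/-- The function `ď` bounding the possible extensions of `d` from below:
`ď(x,y) = sup_{ab ∈ E} max {0, d(ab) - d̂(a,x) - d̂(y,b)}`. -/
noncomputable def checkd (E : X → X → Prop) (d : X → X → ℝ) (x y : X) : ℝ :=
  sSup ({0} ∪ {r | ∃ a b, E a b ∧ r = d a b - hatd E d a x - hatd E d y b})

/-- The pseudometric `d̈` on doubletons:
`d̈(xy,uv) = min {d̂(x,u) + d̂(y,v), d̂(x,v) + d̂(y,u)}`. -/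
noncomputable def ddot (E : X → X → Prop) (d : X → X → ℝ) (x y u v : X) : ℝ :=
  min (hatd E d x u + hatd E d y v) (hatd E d x v + hatd E d y u)

/-- `d` is a graph pseudometric with edge relation `E`:  `E` is a (symmetric, irreflexive)
connected graph, `d` is a nonnegative symmetric weight on the edges, and `d = d̂` on edges. -/
structure IsGraphPseudometric (E : X → X → Prop) (d : X → X → ℝ) : Prop where
  symm : ∀ ⦃a b⦄, E a b → E b a
  irrefl : ∀ a, ¬ E a a
  wt_symm : ∀ ⦃a b⦄, E a b → d a b = d b a
  nonneg : ∀ ⦃a b⦄, E a b → 0 ≤ d a b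
  connected : ∀ x ∈ Vtx E, ∀ y ∈ Vtx E, Joined E x y
  edge_eq : ∀ ⦃a b⦄, E a b → d a b = hatd E d a b

/-- A graph metric is a graph pseudometric with strictly positive weights. -/
def IsGraphMetric (E : X → X → Prop) (d : X → X → ℝ) : Prop :=
  IsGraphPseudometric E d ∧ ∀ ⦃a b⦄, E a b → 0 < d a b

/-- A floppy graph pseudometric: `ď(x,y) < d̂(x,y)` for every `xy ∈ [V]² \ E`. -/
def FloppyPseudometric (E : X → X → Prop) (d : X → X → ℝ) : Prop :=
  IsGraphPseudometric E d ∧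
    ∀ x ∈ Vtx E, ∀ y ∈ Vtx E, x ≠ y → ¬ E x y → checkd E d x y < hatd E d x y

/-- A floppy graph metric: `ď(x,y) < d̂(x,y)` for every `xy ∈ [V]² \ E`. -/
def FloppyMetric (E : X → X → Prop) (d : X → X → ℝ) : Prop :=
  IsGraphMetric E d ∧
    ∀ x ∈ Vtx E, ∀ y ∈ Vtx E, x ≠ y → ¬ E x y → checkd E d x y < hatd E d x y

/-- The edge relation of the one-step extension `E ∪ {xy}`. -/
def extEdge (E : X → X → Prop) (x y : X) : X → X → Prop :=
  fun a b => E a b ∨ (a = x ∧ b = y) ∨ (a = y ∧ b = x)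

/-- The weight function of the one-step extension `d ∪ {⟨xy, r⟩}`. -/
noncomputable def extWt (d : X → X → ℝ) (x y : X) (r : ℝ) : X → X → ℝ :=
  fun a b => if (a = x ∧ b = y) ∨ (a = y ∧ b = x) then r else d a b

/-- The set `[V]² \ E` of unordered pairs of distinct vertices that are not edges. -/
def nonEdgePairs (E : X → X → Prop) : Set (Sym2 X) :=
  {e | ∃ a b : X, e = s(a, b) ∧ a ≠ b ∧ a ∈ Vtx E ∧ b ∈ Vtx E ∧ ¬ E a b}

/-- A set of (unordered) weighted pairs, presented as a relation `R`, is a full metric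
on `V`: it is symmetric, its domain is exactly `[V]²`, it is single-valued, positive,
and satisfies the triangle inequality. -/
def IsFullMetricRel (V : Set X) (R : X → X → ℝ → Prop) : Prop :=
  (∀ a b r, R a b r → R b a r) ∧
  (∀ a b r, R a b r → a ∈ V ∧ b ∈ V ∧ a ≠ b) ∧
  (∀ a b, a ∈ V → b ∈ V → a ≠ b → ∃ r, R a b r) ∧
  (∀ a b r s, R a b r → R a b s → r = s) ∧
  (∀ a b r, R a b r → 0 < r) ∧
  (∀ a b c r s t, R a b r → R b c s → R a c t → t ≤ r + s)

/-- A weight function `D` on `[V]²` is a full metric on `V`. -/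
def IsFullMetricOn (V : Set X) (D : X → X → ℝ) : Prop :=
  (∀ a b, a ∈ V → b ∈ V → a ≠ b → D a b = D b a) ∧
  (∀ a b, a ∈ V → b ∈ V → a ≠ b → 0 < D a b) ∧
  (∀ a b c, a ∈ V → b ∈ V → c ∈ V → a ≠ b → b ≠ c → a ≠ c → D a c ≤ D a b + D b c)

/-- Player I has a winning strategy in the metric-extending game `Game_d(lam, Fam)`:
there are functions `S1, S2` choosing, for each inning `β < lam` and each sequence of
previous answers of player II, a legal doubleton in `[V]²` and a set from `Fam`, such that
for every play of player II respecting the strategy, the resulting relation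
`d ∪ {⟨x_α y_α, r_α⟩ : α < lam}` is a full metric on `V`. -/
def WinningStratI (V : Set X) (E : X → X → Prop) (d : X → X → ℝ)
    (lam : Ordinal.{u}) (Fam : Set (Set ℝ)) : Prop :=
  ∃ (S1 : ∀ β : Ordinal.{u}, β < lam → (∀ α : Ordinal.{u}, α < β → ℝ) → X × X)
    (S2 : ∀ β : Ordinal.{u}, β < lam → (∀ α : Ordinal.{u}, α < β → ℝ) → Set ℝ),
    (∀ β hβ s, S2 β hβ s ∈ Fam) ∧
    (∀ β hβ s, (S1 β hβ s).1 ∈ V ∧ (S1 β hβ s).2 ∈ V ∧ (S1 β hβ s).1 ≠ (S1 β hβ s).2) ∧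
    (∀ s : ∀ α : Ordinal.{u}, α < lam → ℝ,
      (∀ α (hα : α < lam), s α hα ∈ S2 α hα (fun γ hγ => s γ (hγ.trans hα))) →
      IsFullMetricRel V (fun a b r =>
        (E a b ∧ r = d a b) ∨
        ∃ α, ∃ hα : α < lam,
          ((a = (S1 α hα (fun γ hγ => s γ (hγ.trans hα))).1 ∧
            b = (S1 α hα (fun γ hγ => s γ (hγ.trans hα))).2) ∨
           (a = (S1 α hα (fun γ hγ => s γ (hγ.trans hα))).2 ∧
            b = (S1 α hα (fun γ hγ => s γ (hγ.trans hα))).1)) ∧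
          r = s α hα))

/-- Player II has a winning strategy in the metric-extending game `Game_d(lam, Fam)`:
there is a function `T` assigning to each inning `β < lam` and each sequence of moves of
player I (of length `β + 1`) an answer in the set component of the last move, such that
for every legal play of player I, the resulting relation is not a full metric on `V`. -/
def WinningStratII (V : Set X) (E : X → X → Prop) (d : X → X → ℝ)
    (lam : Ordinal.{u}) (Fam : Set (Set ℝ)) : Prop :=
  ∃ T : ∀ β : Ordinal.{u}, β < lam → (∀ α : Ordinal.{u}, α ≤ β → (X × X) × Set ℝ) → ℝ,
    (∀ β hβ p, (p β le_rfl).2 ∈ Fam → T β hβ p ∈ (p β le_rfl).2) ∧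
    (∀ p : ∀ α : Ordinal.{u}, α < lam → (X × X) × Set ℝ,
      (∀ α hα, (p α hα).1.1 ∈ V ∧ (p α hα).1.2 ∈ V ∧ (p α hα).1.1 ≠ (p α hα).1.2 ∧
        (p α hα).2 ∈ Fam) →
      ¬ IsFullMetricRel V (fun a b r =>
        (E a b ∧ r = d a b) ∨
        ∃ α, ∃ hα : α < lam,
          ((a = (p α hα).1.1 ∧ b = (p α hα).1.2) ∨
           (a = (p α hα).1.2 ∧ b = (p α hα).1.1)) ∧
          r = T α hα (fun γ hγ => p γ (lt_of_le_of_lt hγ hα))))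

/-- The edge relation of the glued graph `E_d = E_p ∪ ⋃_{f ∈ F} E_f`. -/
def gluedEdge (Ep : X → X → Prop) (F : Set ((X → X → Prop) × (X → X → ℝ))) :
    X → X → Prop :=
  fun a b => Ep a b ∨ ∃ f ∈ F, f.1 a b

/-- `Λ(v; B) = inf {d̂(a,v) + d̂(v,b) - d̂(a,b) : a, b ∈ B}`. -/
noncomputable def Lam (E : X → X → Prop) (d : X → X → ℝ) (v : X) (B : Set X) : ℝ :=
  sInf {r | ∃ a ∈ B, ∃ b ∈ B, r = hatd E d a v + hatd E d v b - hatd E d a b}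

/-- The gluing setup: a graph pseudometric `p = (Ep, wp)` and a family `F` of graph
pseudometrics such that each member meets `V_p`, agrees with `p̂` on the intersection of
the vertex sets, and distinct members only meet inside `V_p`; `wd` is the glued weight
function `d = p ∪ ⋃ F` on `E_d = E_p ∪ ⋃_{f ∈ F} E_f`. -/
structure GluingSetup (Ep : X → X → Prop) (wp : X → X → ℝ)
    (F : Set ((X → X → Prop) × (X → X → ℝ))) (wd : X → X → ℝ) : Prop where
  hp : IsGraphPseudometric Ep wp
  hF : ∀ f ∈ F, IsGraphPseudometric f.1 f.2
  meet : ∀ f ∈ F, (Vtx f.1 ∩ Vtx Ep).Nonempty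
  agree : ∀ f ∈ F, ∀ x ∈ Vtx f.1 ∩ Vtx Ep, ∀ y ∈ Vtx f.1 ∩ Vtx Ep, x ≠ y →
    hatd f.1 f.2 x y = hatd Ep wp x y
  inter_sub : ∀ f ∈ F, ∀ g ∈ F, f ≠ g → Vtx f.1 ∩ Vtx g.1 ⊆ Vtx Ep
  wd_p : ∀ ⦃a b⦄, Ep a b → wd a b = wp a b
  wd_F : ∀ f ∈ F, ∀ ⦃a b⦄, f.1 a b → wd a b = f.2 a b


theorem walkSums_nonneg {E : X → X → Prop} {d : X → X → ℝ} (hd : IsGraphPseudometric E d)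
    {x y : X} {s : ℝ} (hs : s ∈ walkSums E d x y) : 0 ≤ s := by
  obtain ⟨n, c, -, -, hc, rfl⟩ := hs
  exact Finset.sum_nonneg fun i hi => hd.nonneg (hc i (Finset.mem_range.1 hi))

theorem hatd_le_of_mem_walkSums {E : X → X → Prop} {d : X → X → ℝ}
    (hd : IsGraphPseudometric E d) {x y : X} {s : ℝ} (hs : s ∈ walkSums E d x y) :
    hatd E d x y ≤ s :=
  csInf_le ⟨0, fun _ ht => walkSums_nonneg hd ht⟩ hs

theorem walkSums_nonempty {E : X → X → Prop} {d : X → X → ℝ} (hd : IsGraphPseudometric E d)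
    {x y : X} (hx : x ∈ Vtx E) (hy : y ∈ Vtx E) : (walkSums E d x y).Nonempty := by
  obtain ⟨n, c, h0, hn, hc⟩ := hd.connected x hx y hy
  exact ⟨_, n, c, h0, hn, hc, rfl⟩

theorem add_mem_walkSums {E : X → X → Prop} {d : X → X → ℝ} {x y z : X} {s t : ℝ}
    (hs : s ∈ walkSums E d x y) (ht : t ∈ walkSums E d y z) : s + t ∈ walkSums E d x z := by
  obtain ⟨n, c, h0, hn, hc, rfl⟩ := hs
  obtain ⟨m, e, e0, em, he, rfl⟩ := ht
  have hleft : ∀ i ≤ n, (if i ≤ n then c i else e (i - n)) = c i := fun i hi => if_pos hi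
  have hright : ∀ j, (if n + j ≤ n then c (n + j) else e (n + j - n)) = e j := by
    intro j
    rcases Nat.eq_zero_or_pos j with rfl | hj
    · simp [hn, e0]
    · rw [if_neg (by omega), Nat.add_sub_cancel_left]
  refine ⟨n + m, fun i => if i ≤ n then c i else e (i - n), ?_, ?_, ?_, ?_⟩
  · simpa using h0
  · exact (hright m).trans em
  · intro i hi
    rcases lt_or_ge i n with h | h
    · simpa only [hleft i h.le, hleft (i + 1) h] using hc i h
    · obtain ⟨j, rfl⟩ := Nat.exists_eq_add_of_le h
      simpa only [hright j, add_assoc n j 1, hright (j + 1)] using he j (by omega)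
  · rw [Finset.sum_range_add]
    congr 1
    · refine Finset.sum_congr rfl fun i hi => ?_
      have h := Finset.mem_range.1 hi
      simp only [hleft i h.le, hleft (i + 1) h]
    · refine Finset.sum_congr rfl fun j _ => ?_
      simp only [hright j, add_assoc n j 1, hright (j + 1)]

theorem mem_walkSums_swap {E : X → X → Prop} {d : X → X → ℝ} (hd : IsGraphPseudometric E d)
    {x y : X} {s : ℝ} (hs : s ∈ walkSums E d x y) : s ∈ walkSums E d y x := by
  obtain ⟨n, c, h0, hn, hc, rfl⟩ := hs
  refine ⟨n, fun i => c (n - i), by simpa using hn, by simpa using h0, ?_, ?_⟩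
  · intro i hi
    have h := hd.symm (hc (n - (i + 1)) (by omega))
    rwa [show n - (i + 1) + 1 = n - i by omega] at h
  · rw [← Finset.sum_range_reflect]
    refine Finset.sum_congr rfl fun i hi => ?_
    have hi := Finset.mem_range.1 hi
    rw [hd.wt_symm (hc _ (by omega)), show n - 1 - i + 1 = n - i by omega,
      show n - 1 - i = n - (i + 1) by omega]

theorem hatd_comm {E : X → X → Prop} {d : X → X → ℝ} (hd : IsGraphPseudometric E d)
    (x y : X) : hatd E d x y = hatd E d y x := by
  unfold hatd
  congr 1
  ext s
  exact ⟨mem_walkSums_swap hd, mem_walkSums_swap hd⟩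

theorem hatd_triangle {E : X → X → Prop} {d : X → X → ℝ} (hd : IsGraphPseudometric E d)
    {x y z : X} (hx : x ∈ Vtx E) (hy : y ∈ Vtx E) (hz : z ∈ Vtx E) :
    hatd E d x z ≤ hatd E d x y + hatd E d y z := by
  refine le_of_forall_pos_le_add fun ε hε => ?_
  obtain ⟨s, hs, hsε⟩ := exists_lt_of_csInf_lt (walkSums_nonempty hd hx hy)
    (show sInf (walkSums E d x y) < hatd E d x y + ε / 2 by unfold hatd; linarith)
  obtain ⟨t, ht, htε⟩ := exists_lt_of_csInf_lt (walkSums_nonempty hd hy hz)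
    (show sInf (walkSums E d y z) < hatd E d y z + ε / 2 by unfold hatd; linarith)
  linarith [hatd_le_of_mem_walkSums hd (add_mem_walkSums hs ht)]

theorem ddot_swap_left (E : X → X → Prop) (d : X → X → ℝ) (x y u v : X) :
    ddot E d y x u v = ddot E d x y u v := by
  unfold ddot
  rw [min_comm, add_comm (hatd E d x u), add_comm (hatd E d x v)]

theorem ddot_swap_right (E : X → X → Prop) (d : X → X → ℝ) (x y u v : X) :
    ddot E d x y v u = ddot E d x y u v :=
  min_comm _ _

/-- The triangle inequality for `d̈`, with the middle doubleton `xy` first in both terms. -/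
theorem ddot_triangle {E : X → X → Prop} {d : X → X → ℝ} (hd : IsGraphPseudometric E d)
    {x y u v w z : X} (hx : x ∈ Vtx E) (hy : y ∈ Vtx E) (hu : u ∈ Vtx E) (hv : v ∈ Vtx E)
    (hw : w ∈ Vtx E) (hz : z ∈ Vtx E) :
    ddot E d u v w z ≤ ddot E d x y u v + ddot E d x y w z := by
  have huw := hatd_triangle hd hu hx hw
  have huw' := hatd_triangle hd hu hy hw
  have huz := hatd_triangle hd hu hx hz
  have huz' := hatd_triangle hd hu hy hz
  have hvw := hatd_triangle hd hv hx hw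
  have hvw' := hatd_triangle hd hv hy hw
  have hvz := hatd_triangle hd hv hx hz
  have hvz' := hatd_triangle hd hv hy hz
  rw [hatd_comm hd u x] at huw huz
  rw [hatd_comm hd u y] at huw' huz'
  rw [hatd_comm hd v x] at hvw hvz
  rw [hatd_comm hd v y] at hvw' hvz'
  unfold ddot
  rcases min_choice (hatd E d x u + hatd E d y v) (hatd E d x v + hatd E d y u) with h | h <;>
    rcases min_choice (hatd E d x w + hatd E d y z) (hatd E d x z + hatd E d y w) with h' | h' <;>
    rw [h, h', min_le_iff] <;>
    first
      | left; linarith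
      | right; linarith

/-- A full metric relation on `V` is given by a distance function on `V`. -/
theorem IsFullMetricRel.exists_dist {V : Set X} {R : X → X → ℝ → Prop}
    (h : IsFullMetricRel V R) :
    ∃ D : X → X → ℝ, (∀ a b r, R a b r → r = D a b) ∧
      (∀ a, D a a = 0) ∧
      (∀ a ∈ V, ∀ b ∈ V, D a b = D b a) ∧
      (∀ a ∈ V, ∀ b ∈ V, ∀ c ∈ V, D a c ≤ D a b + D b c) := by
  obtain ⟨hsymm, hdom, htotal, huniq, hpos, htri⟩ := h
  have hex : ∀ a b, ∃ r, (∀ s, R a b s → s = r) ∧ (a = b → r = 0) ∧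
      (a ∈ V → b ∈ V → a ≠ b → R a b r) := by
    intro a b
    by_cases hab : a ∈ V ∧ b ∈ V ∧ a ≠ b
    · obtain ⟨r, hr⟩ := htotal a b hab.1 hab.2.1 hab.2.2
      exact ⟨r, fun s hs => huniq a b s r hs hr, fun e => absurd e hab.2.2, fun _ _ _ => hr⟩
    · exact ⟨0, fun s hs => absurd (hdom a b s hs) hab, fun _ => rfl,
        fun ha hb hne => absurd ⟨ha, hb, hne⟩ hab⟩
  choose D hDuniq hDdiag hDrel using hex
  have hsymmD : ∀ a ∈ V, ∀ b ∈ V, D a b = D b a := by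
    intro a ha b hb
    by_cases hab : a = b
    · rw [hab]
    · exact hDuniq b a _ (hsymm _ _ _ (hDrel a b ha hb hab))
  refine ⟨D, fun a b r hr => hDuniq a b r hr, fun a => hDdiag a a rfl, hsymmD, ?_⟩
  intro a ha b hb c hc
  by_cases hab : a = b
  · subst hab; simp [hDdiag a a rfl]
  by_cases hbc : b = c
  · subst hbc; simp [hDdiag b b rfl]
  by_cases hac : a = c
  · subst hac
    rw [hDdiag a a rfl]
    linarith [hpos _ _ _ (hDrel a b ha hb hab), hpos _ _ _ (hDrel b a hb hc hbc)]
  · exact htri a b c _ _ _ (hDrel a b ha hb hab) (hDrel b c hb hc hbc) (hDrel a c ha hc hac)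

/-- A pseudometric on the vertex set extending `d` is bounded above by `d̂`. -/
theorem le_hatd_of_extends {E : X → X → Prop} {d D : X → X → ℝ}
    (hd : IsGraphPseudometric E d) (hE : ∀ a b, E a b → d a b = D a b) (hdiag : ∀ a, D a a = 0)
    (htri : ∀ a ∈ Vtx E, ∀ b ∈ Vtx E, ∀ c ∈ Vtx E, D a c ≤ D a b + D b c)
    {x y : X} (hx : x ∈ Vtx E) (hy : y ∈ Vtx E) : D x y ≤ hatd E d x y := by
  refine le_csInf (walkSums_nonempty hd hx hy) ?_
  rintro s ⟨n, c, rfl, rfl, hc, rfl⟩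
  clear hy
  induction n with
  | zero => simp [hdiag]
  | succ n ih =>
    have hedge := hc n n.lt_succ_self
    have hprev := ih fun i hi => hc i (hi.trans n.lt_succ_self)
    have hstep := htri (c 0) hx (c n) ⟨_, hedge⟩ (c (n + 1)) ⟨_, hd.symm hedge⟩
    rw [Finset.sum_range_succ, hE _ _ hedge]
    linarith

/-- A pseudometric on the vertex set bounded by `d̂` is 1-Lipschitz with respect to `d̈`. -/
theorem abs_sub_le_ddot {E : X → X → Prop} {d D : X → X → ℝ}
    (hle : ∀ x ∈ Vtx E, ∀ y ∈ Vtx E, D x y ≤ hatd E d x y)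
    (hsymm : ∀ a ∈ Vtx E, ∀ b ∈ Vtx E, D a b = D b a)
    (htri : ∀ a ∈ Vtx E, ∀ b ∈ Vtx E, ∀ c ∈ Vtx E, D a c ≤ D a b + D b c)
    {x y u v : X} (hx : x ∈ Vtx E) (hy : y ∈ Vtx E) (hu : u ∈ Vtx E) (hv : v ∈ Vtx E) :
    |D x y - D u v| ≤ ddot E d x y u v := by
  have key : ∀ u ∈ Vtx E, ∀ v ∈ Vtx E,
      |D x y - D u v| ≤ hatd E d x u + hatd E d y v := by
    intro u hu v hv
    have hxu := hle x hx u hu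
    have hyv := hle y hy v hv
    rw [abs_le]
    constructor
    · have h₁ := htri u hu x hx v hv
      have h₂ := htri x hx y hy v hv
      rw [hsymm u hu x hx] at h₁
      linarith
    · have h₁ := htri x hx u hu y hy
      have h₂ := htri u hu v hv y hy
      rw [hsymm v hv y hy] at h₂
      linarith
  refine le_min (key u hu v hv) ?_
  rw [hsymm u hu v hv]
  exact key v hv u hu

/-- The value `v` at inning `β` is a `d̈`-limit of the values `s` answered at earlier innings. -/
def IsForcedValue (E : X → X → Prop) (d : X → X → ℝ) (β : Ordinal.{u})
    (p : ∀ α : Ordinal.{u}, α ≤ β → (X × X) × Set ℝ) (s : ∀ α : Ordinal.{u}, α < β → ℝ)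
    (v : ℝ) : Prop :=
  ∀ ε : ℝ, 0 < ε → ∃ α, ∃ hα : α < β,
    ddot E d (p α hα.le).1.1 (p α hα.le).1.2 (p β le_rfl).1.1 (p β le_rfl).1.2 < ε ∧
      |s α hα - v| < ε

/-- An answer in the set offered at inning `β` that avoids a forced value. -/
noncomputable def avoidForced (E : X → X → Prop) (d : X → X → ℝ) (β : Ordinal.{u})
    (p : ∀ α : Ordinal.{u}, α ≤ β → (X × X) × Set ℝ) (s : ∀ α : Ordinal.{u}, α < β → ℝ) : ℝ :=
  Classical.epsilon fun r =>
    r ∈ (p β le_rfl).2 ∧ r ≠ Classical.epsilon (IsForcedValue E d β p s)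

/-- The strategy of player II that always avoids the value forced by continuity. -/
noncomputable def avoidingStrategy (E : X → X → Prop) (d : X → X → ℝ) :
    ∀ β : Ordinal.{u}, (∀ α : Ordinal.{u}, α ≤ β → (X × X) × Set ℝ) → ℝ :=
  WellFounded.fix (C := fun β : Ordinal.{u} =>
      (∀ α : Ordinal.{u}, α ≤ β → (X × X) × Set ℝ) → ℝ) (r := (· < ·)) wellFounded_lt
    fun β ih p => avoidForced E d β p fun α hα => ih α hα fun γ hγ => p γ (hγ.trans hα.le)

theorem avoidingStrategy_eq (E : X → X → Prop) (d : X → X → ℝ) (β : Ordinal.{u})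
    (p : ∀ α : Ordinal.{u}, α ≤ β → (X × X) × Set ℝ) :
    avoidingStrategy E d β p = avoidForced E d β p fun α hα =>
      avoidingStrategy E d α fun γ hγ => p γ (hγ.trans hα.le) := by
  unfold avoidingStrategy
  rw [WellFounded.fix_eq]

theorem avoidForced_spec (E : X → X → Prop) (d : X → X → ℝ) {β : Ordinal.{u}}
    {p : ∀ α : Ordinal.{u}, α ≤ β → (X × X) × Set ℝ} (s : ∀ α : Ordinal.{u}, α < β → ℝ)
    (hF : ∃ a b : ℝ, a ∈ (p β le_rfl).2 ∧ b ∈ (p β le_rfl).2 ∧ a ≠ b) :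
    avoidForced E d β p s ∈ (p β le_rfl).2 ∧
      avoidForced E d β p s ≠ Classical.epsilon (IsForcedValue E d β p s) := by
  refine Classical.epsilon_spec (p := fun r =>
    r ∈ (p β le_rfl).2 ∧ r ≠ Classical.epsilon (IsForcedValue E d β p s)) ?_
  obtain ⟨a, b, ha, hb, hab⟩ := hF
  by_cases h : a = Classical.epsilon (IsForcedValue E d β p s)
  · exact ⟨b, hb, fun hb' => hab (h.trans hb'.symm)⟩
  · exact ⟨a, ha, h⟩

/-- A family of doubletons indexed by ordinals, each at positive `d̈`-distance from its
predecessors, cannot exhaust a `d̈`-separable uncountable set. -/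
theorem countable_of_leftSeparated {E : X → X → Prop} {d : X → X → ℝ}
    (hd : IsGraphPseudometric E d) {S A : Set (X × X)}
    (hS : ∀ q ∈ S, q.1 ∈ Vtx E ∧ q.2 ∈ Vtx E) (hAS : A ⊆ S) (hA : A.Countable)
    (hdense : ∀ q ∈ S, ∀ ε : ℝ, 0 < ε → ∃ a ∈ A, ddot E d a.1 a.2 q.1 q.2 < ε)
    {I : Type*} [LinearOrder I] (P : I → X × X)
    (hcover : ∀ q ∈ S, ∃ i, q = P i ∨ q = (P i).swap)
    (hsepd : ∀ j, ∃ ε : ℝ, 0 < ε ∧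
      ∀ i < j, ε ≤ ddot E d (P i).1 (P i).2 (P j).1 (P j).2) :
    S.Countable := by
  have hchoice : ∀ q : S, ∃ i : I, ∃ a : A, ∃ n : ℕ,
      (q.1 = P i ∨ q.1 = (P i).swap) ∧
      ddot E d a.1.1 a.1.2 (P i).1 (P i).2 < 1 / ((n : ℝ) + 1) ∧
      ∀ j < i, 2 * (1 / ((n : ℝ) + 1)) ≤ ddot E d (P j).1 (P j).2 (P i).1 (P i).2 := by
    rintro ⟨q, hq⟩
    obtain ⟨i, hi⟩ := hcover q hq
    obtain ⟨ε, hε, hlt⟩ := hsepd i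
    obtain ⟨n, hn⟩ := exists_nat_one_div_lt (half_pos hε)
    obtain ⟨a, ha, haq⟩ := hdense q hq (1 / ((n : ℝ) + 1)) (by positivity)
    refine ⟨i, ⟨a, ha⟩, n, hi, ?_, fun j hj => by linarith [hlt j hj]⟩
    rcases hi with rfl | rfl
    · exact haq
    · rwa [Prod.fst_swap, Prod.snd_swap, ddot_swap_right] at haq
  choose i a n hi ha hn using hchoice
  have hV : ∀ q : S, (P (i q)).1 ∈ Vtx E ∧ (P (i q)).2 ∈ Vtx E := by
    intro q
    have hq := hS q.1 q.2
    rcases hi q with h | h <;> rw [h] at hq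
    · exact hq
    · exact ⟨hq.2, hq.1⟩
  have hnotlt : ∀ q q' : S, a q = a q' → n q = n q' → ¬ i q < i q' := by
    intro q q' haa hnn hlt
    have hmid := hS (a q').1 (hAS (a q').2)
    have h := ddot_triangle hd hmid.1 hmid.2 (hV q).1 (hV q).2 (hV q').1 (hV q').2
    have h₁ := ha q
    rw [haa, hnn] at h₁
    linarith [ha q', hn q' (i q) hlt]
  have hinj : Function.Injective fun q : S => (a q, n q, decide (q.1 = P (i q))) := by
    intro q q' h
    simp only [Prod.mk.injEq, decide_eq_decide] at h
    obtain ⟨haa, hnn, hiff⟩ := h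
    have hii : i q = i q' :=
      le_antisymm (not_lt.1 (hnotlt q' q haa.symm hnn.symm)) (not_lt.1 (hnotlt q q' haa hnn))
    apply Subtype.ext
    by_cases hq : q.1 = P (i q)
    · rw [hq, hii, ← hiff.1 hq]
    · rw [(hi q).resolve_left hq, (hi q').resolve_left fun hq' => hq (hiff.2 hq'), hii]
  have : Countable A := hA
  exact Set.countable_coe_iff.1 hinj.countable

/-- If `d` is a graph metric such that the metric space `([V]², d̈)`
contains a separable uncountable subspace `S ⊆ [V]² \ E`, then for every ordinal `λ`
and every family `𝔉` of at least two-element subsets of `ℝ`, player II has a winning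
strategy in the metric-extending game `Game_d(λ, 𝔉)`. -/
theorem playerII_winning_strategy (E : X → X → Prop) (d : X → X → ℝ)
    (hd : IsGraphMetric E d) (S : Set (X × X))
    (hS : ∀ q ∈ S, q.1 ∈ Vtx E ∧ q.2 ∈ Vtx E ∧ q.1 ≠ q.2 ∧ ¬ E q.1 q.2)
    (huncount : ¬ S.Countable)
    (hsep : ∃ A ⊆ S, A.Countable ∧ ∀ q ∈ S, ∀ ε : ℝ, 0 < ε →
      ∃ a ∈ A, ddot E d a.1 a.2 q.1 q.2 < ε)
    (lam : Ordinal.{u}) (Fam : Set (Set ℝ))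
    (hFam : ∀ G ∈ Fam, ∃ s t : ℝ, s ∈ G ∧ t ∈ G ∧ s ≠ t) :
    WinningStratII (Vtx E) E d lam Fam := by
  obtain ⟨A, hAS, hA, hdense⟩ := hsep
  refine ⟨fun β _ p => avoidingStrategy E d β p, ?_, ?_⟩
  · intro β _ p hp
    beta_reduce
    rw [avoidingStrategy_eq]
    exact (avoidForced_spec E d _ (hFam _ hp)).1
  intro p hp hfull
  obtain ⟨D, hD, hdiag, hsymm, htri⟩ := hfull.exists_dist
  have htotal := hfull.2.2.1
  have hE : ∀ a b, E a b → d a b = D a b := fun a b hab => hD a b _ (Or.inl ⟨hab, rfl⟩)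
  have hplay : ∀ α (hα : α < lam),
      avoidingStrategy E d α (fun γ hγ => p γ (lt_of_le_of_lt hγ hα)) =
        D (p α hα).1.1 (p α hα).1.2 :=
    fun α hα => hD _ _ _ (Or.inr ⟨α, hα, Or.inl ⟨rfl, rfl⟩, rfl⟩)
  have hlip : ∀ α (hα : α < lam) β (hβ : β < lam),
      |D (p α hα).1.1 (p α hα).1.2 - D (p β hβ).1.1 (p β hβ).1.2| ≤
        ddot E d (p α hα).1.1 (p α hα).1.2 (p β hβ).1.1 (p β hβ).1.2 :=
    fun α hα β hβ => abs_sub_le_ddot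
      (fun x hx y hy => le_hatd_of_extends hd.1 hE hdiag htri hx hy) hsymm htri
      (hp α hα).1 (hp α hα).2.1 (hp β hβ).1 (hp β hβ).2.1
  refine huncount (countable_of_leftSeparated hd.1 (fun q hq => ⟨(hS q hq).1, (hS q hq).2.1⟩)
    hAS hA hdense (fun i : Set.Iio lam => (p i.1 i.2).1) ?_ ?_)
  · intro q hq
    obtain ⟨hq₁, hq₂, hne, hnE⟩ := hS q hq
    obtain ⟨r, ⟨hr, -⟩ | ⟨α, hα, h, -⟩⟩ := htotal q.1 q.2 hq₁ hq₂ hne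
    · exact absurd hr hnE
    · exact ⟨⟨α, hα⟩, h.imp (fun h => Prod.ext h.1 h.2) fun h => Prod.ext h.1 h.2⟩
  · rintro ⟨β, hβ : β < lam⟩
    by_contra! hclose
    have hforced : ∀ v, IsForcedValue E d β (fun γ hγ => p γ (lt_of_le_of_lt hγ hβ))
        (fun α hα => avoidingStrategy E d α fun γ hγ => p γ (lt_of_le_of_lt hγ (hα.trans hβ))) v ↔
        v = D (p β hβ).1.1 (p β hβ).1.2 := by
      intro v
      constructor
      · intro hv
        refine eq_of_abs_sub_le_all fun ε hε => ?_
        obtain ⟨α, hα, hlt, habs⟩ := hv (ε / 2) (half_pos hε)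
        beta_reduce at hlt habs
        rw [hplay α (hα.trans hβ)] at habs
        have h := hlip α (hα.trans hβ) β hβ
        have h' := abs_sub_le v (D (p α (hα.trans hβ)).1.1 (p α (hα.trans hβ)).1.2)
          (D (p β hβ).1.1 (p β hβ).1.2)
        rw [abs_sub_comm v (D (p α _).1.1 _)] at h'
        linarith
      · rintro rfl ε hε
        obtain ⟨⟨α, hαl⟩, hα, hlt⟩ := hclose ε hε
        refine ⟨α, hα, hlt, ?_⟩
        beta_reduce
        rw [hplay α hαl]
        exact (hlip α hαl β hβ).trans_lt hlt
    have hne := (avoidForced_spec E d (p := fun γ hγ => p γ (lt_of_le_of_lt hγ hβ))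
      (fun α hα => avoidingStrategy E d α fun γ hγ => p γ (lt_of_le_of_lt hγ (hα.trans hβ)))
      (hFam _ (hp β hβ).2.2.2)).2
    rw [(hforced _).1 (Classical.epsilon_spec ⟨_, (hforced _).2 rfl⟩), ← hplay β hβ] at hne
    exact hne (avoidingStrategy_eq E d β _).symm

end GraphMetricPaper
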